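/- Let Ω ⊂ X be an arbitrary set. The space of sets A ⊂ Ω with capa_1(A) < ∞, equipped with the distance d(A_1, A_2) := capa_1(A_1 Δ A_2) (where Δ denotes symmetric difference), is a complete metric space, once sets A_1, A_2 with capa_1(A_1 Δ A_2) = 0 are identified. -/

import Mathlib

open MeasureTheory Filter Metric Set
open scoped Topology ENNReal NNReal symmDiff

noncomputable section

namespace PaperBV

/-- A rectifiable curve parametrized by arc-length: a `1`-Lipschitz map on `[0, len]`. -/
structure Curve (X : Type*) [MetricSpace X] where
  len : ℝ
  len_nonneg : 0 ≤ len
  toFun : ℝ → X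
  lip : LipschitzOnWith 1 toFun (Set.Icc 0 len)

variable {X : Type*} [MetricSpace X] [MeasurableSpace X] [BorelSpace X]

/-- The curve lies in the set `A`. -/
def Curve.In (γ : Curve X) (A : Set X) : Prop :=
  ∀ t ∈ Set.Icc (0 : ℝ) γ.len, γ.toFun t ∈ A

/-- The curve integral `∫_γ g ds` of a nonnegative function, for an
arc-length parametrized curve. -/
def Curve.integral (γ : Curve X) (g : X → ℝ≥0∞) : ℝ≥0∞ :=
  ∫⁻ t in Set.Icc (0 : ℝ) γ.len, g (γ.toFun t)

/-- The upper gradient inequality `|u(x) - u(y)| ≤ ∫_γ g ds` along the curve `γ`,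
where `x, y` are the endpoints of `γ`. -/
def UGIneq (u : X → ℝ) (g : X → ℝ≥0∞) (γ : Curve X) : Prop :=
  ENNReal.ofReal |u (γ.toFun 0) - u (γ.toFun γ.len)| ≤ γ.integral g

/-- `g` is an upper gradient of `u` on `X`: `g` is nonnegative (automatic in `ℝ≥0∞`),
Borel, and the upper gradient inequality holds along every curve. -/
def IsUpperGradient (u : X → ℝ) (g : X → ℝ≥0∞) : Prop :=
  Measurable g ∧ ∀ γ : Curve X, UGIneq u g γ

/-- A family of curves has zero `1`-modulus: there is a nonnegative Borel function
`ρ ∈ L¹(X)` whose curve integral is infinite along every curve of the family. -/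
def ZeroMod (μ : Measure X) (Γ : Set (Curve X)) : Prop :=
  ∃ ρ : X → ℝ≥0∞, Measurable ρ ∧ (∫⁻ x, ρ x ∂μ) < ∞ ∧ ∀ γ ∈ Γ, γ.integral ρ = ∞

/-- `g` is a `1`-weak upper gradient of `u` in `A`: `g` is nonnegative, `μ`-measurable,
and the upper gradient inequality holds along `1`-a.e. curve in `A`. -/
def IsWeakUpperGradientOn (μ : Measure X) (u : X → ℝ) (g : X → ℝ≥0∞) (A : Set X) : Prop :=
  AEMeasurable g μ ∧ ZeroMod μ {γ : Curve X | γ.In A ∧ ¬ UGIneq u g γ}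

/-- A nonnegative function `g` belongs to `L¹_loc(A)`. -/
def LIntegrableLocOn (μ : Measure X) (g : X → ℝ≥0∞) (A : Set X) : Prop :=
  ∀ x ∈ A, ∃ r > (0 : ℝ), (∫⁻ y in A ∩ Metric.ball x r, g y ∂μ) < ∞

/-- `g` is the minimal `1`-weak upper gradient of `u` in `A`: a `1`-weak upper gradient
satisfying `g ≤ g'` `μ`-a.e. in `A` for every `1`-weak upper gradient `g' ∈ L¹_loc(A)`. -/
def IsMinimalWUG (μ : Measure X) (u : X → ℝ) (g : X → ℝ≥0∞) (A : Set X) : Prop :=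
  IsWeakUpperGradientOn μ u g A ∧
    ∀ g' : X → ℝ≥0∞, IsWeakUpperGradientOn μ u g' A → LIntegrableLocOn μ g' A →
      ∀ᵐ x ∂(μ.restrict A), g x ≤ g' x

/-- The Newtonian norm `‖u‖_{N^{1,1}(A)}` (valued in `ℝ≥0∞`). -/
def NNorm (μ : Measure X) (A : Set X) (u : X → ℝ) : ℝ≥0∞ :=
  (∫⁻ x in A, ENNReal.ofReal |u x| ∂μ) +
    ⨅ (g : X → ℝ≥0∞) (_ : IsWeakUpperGradientOn μ u g A), ∫⁻ x in A, g x ∂μ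

/-- `u ∈ N^{1,1}(A)`. -/
def MemN11 (μ : Measure X) (A : Set X) (u : X → ℝ) : Prop :=
  NNorm μ A u < ∞

/-- `u ∈ N^{1,1}_loc(A)`: every point of `A` has a ball `B` with `u ∈ N^{1,1}(A ∩ B)`. -/
def MemN11Loc (μ : Measure X) (A : Set X) (u : X → ℝ) : Prop :=
  ∀ x ∈ A, ∃ r > (0 : ℝ), NNorm μ (A ∩ Metric.ball x r) u < ∞

/-- `u ∈ N^{1,1}(Ω')` for every bounded open `Ω' ⊆ X`. -/
def MemN11LocBounded (μ : Measure X) (u : X → ℝ) : Prop :=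
  ∀ Ω' : Set X, IsOpen Ω' → Bornology.IsBounded Ω' → NNorm μ Ω' u < ∞

/-- `u ∈ N^{1,1}_0(Ω)`: `u ∈ N^{1,1}(X)` and `u = 0` outside `Ω`. -/
def MemN110 (μ : Measure X) (Ω : Set X) (u : X → ℝ) : Prop :=
  MemN11 μ Set.univ u ∧ ∀ x ∉ Ω, u x = 0

/-- The `1`-capacity `capa₁(A) = inf {‖u‖_{N^{1,1}(X)} : u ∈ N^{1,1}(X), u ≥ 1 on A}`. -/
def capa1 (μ : Measure X) (A : Set X) : ℝ≥0∞ :=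
  ⨅ (u : X → ℝ) (_ : MemN11 μ Set.univ u) (_ : ∀ x ∈ A, 1 ≤ u x), NNorm μ Set.univ u

/-- `U` is `1`-quasiopen: for every `ε > 0` there is an open `G` with `capa₁(G) < ε`
such that `U ∪ G` is open. -/
def QuasiOpen (μ : Measure X) (U : Set X) : Prop :=
  ∀ ε : ℝ, 0 < ε → ∃ G : Set X, IsOpen G ∧ capa1 μ G < ENNReal.ofReal ε ∧ IsOpen (U ∪ G)

/-- `u ∈ L¹_loc(A)`. -/
def MemL1Loc (μ : Measure X) (A : Set X) (u : X → ℝ) : Prop :=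
  AEMeasurable u (μ.restrict A) ∧
    ∀ x ∈ A, ∃ r > (0 : ℝ), (∫⁻ y in A ∩ Metric.ball x r, ENNReal.ofReal |u y| ∂μ) < ∞

/-- `v i → u` in `L¹_loc(A)`: every `x ∈ A` has a ball `B` with `v i → u` in `L¹(A ∩ B)`. -/
def L1LocConv (μ : Measure X) (A : Set X) (v : ℕ → X → ℝ) (u : X → ℝ) : Prop :=
  ∀ x ∈ A, ∃ r > (0 : ℝ),
    Filter.Tendsto (fun i => ∫⁻ y in A ∩ Metric.ball x r, ENNReal.ofReal |v i y - u y| ∂μ)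
      Filter.atTop (𝓝 0)

/-- `u` is locally Lipschitz on `Ω`. -/
def LocLipOn (u : X → ℝ) (Ω : Set X) : Prop :=
  ∀ x ∈ Ω, ∃ r > (0 : ℝ), ∃ K : ℝ≥0, LipschitzOnWith K u (Ω ∩ Metric.ball x r)

/-- The total variation `‖Du‖(Ω)` of `u` in an open set `Ω`: the infimum of
`liminf_i ∫_Ω g_{v i} dμ` over sequences of locally Lipschitz functions `v i → u`
in `L¹_loc(Ω)`, where `g_{v i}` is the minimal `1`-weak upper gradient of `v i` in `Ω`. -/
def tvOpen (μ : Measure X) (Ω : Set X) (u : X → ℝ) : ℝ≥0∞ :=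
  ⨅ (v : ℕ → X → ℝ) (g : ℕ → X → ℝ≥0∞) (_ : ∀ i, LocLipOn (v i) Ω)
    (_ : ∀ i, IsMinimalWUG μ (v i) (g i) Ω) (_ : L1LocConv μ Ω v u),
    Filter.liminf (fun i => ∫⁻ x in Ω, g i x ∂μ) Filter.atTop

/-- The total variation `‖Du‖(A)` of `u` in an arbitrary set `A`:
`inf {‖Du‖(Ω) : Ω ⊇ A open}`. -/
def tv (μ : Measure X) (A : Set X) (u : X → ℝ) : ℝ≥0∞ :=
  ⨅ (Ω : Set X) (_ : IsOpen Ω) (_ : A ⊆ Ω), tvOpen μ Ω u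

/-- The perimeter `P(E, A) = ‖Dχ_E‖(A)` for arbitrary `A`. -/
def perim (μ : Measure X) (E A : Set X) : ℝ≥0∞ :=
  tv μ A (Set.indicator E (fun _ => (1 : ℝ)))

/-- The perimeter `P(E, Ω) = ‖Dχ_E‖(Ω)` for open `Ω`. -/
def perimOpen (μ : Measure X) (E Ω : Set X) : ℝ≥0∞ :=
  tvOpen μ Ω (Set.indicator E (fun _ => (1 : ℝ)))

/-- The measure `μ` is doubling with constant `Cd`. -/
def Doubling (μ : Measure X) (Cd : ℝ) : Prop :=
  1 ≤ Cd ∧ ∀ (x : X) (r : ℝ), 0 < r →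
    0 < μ (Metric.ball x (2 * r)) ∧
      μ (Metric.ball x (2 * r)) ≤ ENNReal.ofReal Cd * μ (Metric.ball x r) ∧
      μ (Metric.ball x r) < ∞

/-- The space supports a `(1,1)`-Poincaré inequality with constants `CP, lam`. -/
def Poincare (μ : Measure X) (CP lam : ℝ) : Prop :=
  1 ≤ CP ∧ 1 ≤ lam ∧ ∀ (x : X) (r : ℝ), 0 < r → ∀ (u : X → ℝ) (g : X → ℝ≥0∞),
    MemL1Loc μ Set.univ u → IsUpperGradient u g →
      ENNReal.ofReal (⨍ y in Metric.ball x r, |u y - ⨍ z in Metric.ball x r, u z ∂μ| ∂μ)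
        ≤ ENNReal.ofReal (CP * r) *
            ((∫⁻ y in Metric.ball x (lam * r), g y ∂μ) / μ (Metric.ball x (lam * r)))

/-- The restricted spherical Hausdorff content of codimension one. -/
def HR (μ : Measure X) (R : ℝ) (A : Set X) : ℝ≥0∞ :=
  ⨅ (c : ℕ → X) (r : ℕ → ℝ) (_ : ∀ i, 0 < r i ∧ r i ≤ R)
    (_ : A ⊆ ⋃ i, Metric.ball (c i) (r i)),
    ∑' i, μ (Metric.ball (c i) (r i)) / ENNReal.ofReal (r i)

/-- The codimension-one Hausdorff measure `H(A) = lim_{R → 0} H_R(A)`. -/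
def Hcodim (μ : Measure X) (A : Set X) : ℝ≥0∞ :=
  ⨆ (R : ℝ) (_ : 0 < R), HR μ R A

/-- The lower approximate limit `u^∧`. -/
def lowerApprox (μ : Measure X) (u : X → ℝ) (x : X) : EReal :=
  sSup ((fun t : ℝ => (t : EReal)) ''
    {t : ℝ | Filter.Tendsto
      (fun r => μ (Metric.ball x r ∩ {y | u y < t}) / μ (Metric.ball x r))
      (𝓝[>] (0 : ℝ)) (𝓝 0)})

/-- The upper approximate limit `u^∨`. -/
def upperApprox (μ : Measure X) (u : X → ℝ) (x : X) : EReal :=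
  sInf ((fun t : ℝ => (t : EReal)) ''
    {t : ℝ | Filter.Tendsto
      (fun r => μ (Metric.ball x r ∩ {y | t < u y}) / μ (Metric.ball x r))
      (𝓝[>] (0 : ℝ)) (𝓝 0)})

/-- `u ∈ BV_loc(X)`: `u ∈ L¹_loc(X)` with `‖Du‖(Ω') < ∞` for every bounded open `Ω'`. -/
def MemBVLoc (μ : Measure X) (u : X → ℝ) : Prop :=
  MemL1Loc μ Set.univ u ∧
    ∀ Ω' : Set X, IsOpen Ω' → Bornology.IsBounded Ω' → tvOpen μ Ω' u < ∞

/-- The measure-theoretic interior `I_E`. -/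
def mInterior (μ : Measure X) (E : Set X) : Set X :=
  {x | Filter.Tendsto (fun r => μ (Metric.ball x r \ E) / μ (Metric.ball x r))
    (𝓝[>] (0 : ℝ)) (𝓝 0)}

/-- The measure-theoretic exterior `O_E`. -/
def mExterior (μ : Measure X) (E : Set X) : Set X :=
  {x | Filter.Tendsto (fun r => μ (Metric.ball x r ∩ E) / μ (Metric.ball x r))
    (𝓝[>] (0 : ℝ)) (𝓝 0)}

/-- The measure-theoretic boundary `∂*E`: the points where both `E` and its complement
have positive upper density. -/
def mBoundary (μ : Measure X) (E : Set X) : Set X :=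
  {x | 0 < Filter.limsup (fun r => μ (Metric.ball x r ∩ E) / μ (Metric.ball x r))
        (𝓝[>] (0 : ℝ)) ∧
       0 < Filter.limsup (fun r => μ (Metric.ball x r \ E) / μ (Metric.ball x r))
        (𝓝[>] (0 : ℝ))}

/-!
For any outer measure `m` the pseudometric `m (A ∆ B)` is complete: a Cauchy sequence with summable
increments converges to its `limsup`, by countable subadditivity. So everything reduces to countable
subadditivity of the capacity. The natural test function for `⋃ i, A i` is the supremum of test
functions `v i` for the `A i`, and estimating its `L¹` norm by the sum of the norms needs the `v i`
to be measurable, which is not part of the definition of `N^{1,1}`.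

Every function `u` with an integrable upper gradient `g` is in fact a.e. measurable
(Järvenpää–Järvenpää–Rogovin–Rogovin–Shanmugalingam). By Vitali–Carathéodory, choose a lower
semicontinuous upper gradient `G ≥ 1` with `g ≤ G`. For `n, ε > 0`, the distance from `x` weighted
by `min G n` and measured along paths with jumps of size `ε` is continuous with upper gradient
`min G n`, so telescoping the Poincaré inequality bounds it at `y` by `C m d(x, y)` whenever the
maximal function of `G` is at most `m` at `x` and `y`. Letting `ε → 0` and `n → ∞`, Arzelà–Ascoli
and the Fatou lemma yield a curve from `x` to `y` with `∫_γ G ds ≤ C m d(x, y)`. Hence `u` is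
Lipschitz on each sublevel set of the maximal function, and the union of these has full measure.
-/

/-! ### The symmetric-difference metric of an outer measure -/

section SymmDiffMetric

variable {α : Type*}

theorem symmDiff_limsup_subset_iUnion (A : ℕ → Set α) (k : ℕ) :
    A k ∆ limsup A atTop ⊆ ⋃ j, A (k + j) ∆ A (k + j + 1) := by
  intro x hx
  by_contra hstep
  have hconst : ∀ j, x ∈ A (k + j) ↔ x ∈ A k := by
    intro j
    induction j with
    | zero => rfl
    | succ j ih =>
      simp only [mem_iUnion, Set.mem_symmDiff, not_exists] at hstep
      have := hstep j
      rw [← ih, ← add_assoc]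
      tauto
  have hlimsup : x ∈ limsup A atTop ↔ x ∈ A k := by
    rw [mem_limsup_iff_frequently_mem]
    have hev : ∀ᶠ n in atTop, (x ∈ A n ↔ x ∈ A k) := by
      filter_upwards [eventually_ge_atTop k] with n hn
      simpa only [Nat.add_sub_cancel' hn] using hconst (n - k)
    rw [frequently_congr hev, frequently_const]
  rw [Set.mem_symmDiff] at hx
  tauto

/-- The extended pseudometric `(A, B) ↦ m (A ∆ B)` on the sets of a type with an outer
measure `m`. It is not a global instance since it depends on `m`. -/
abbrev symmDiffPseudoEMetricSpace (m : OuterMeasure α) : PseudoEMetricSpace (Set α) where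
  edist A B := m (A ∆ B)
  edist_self A := by simp only [symmDiff_self, Set.bot_eq_empty, measure_empty]
  edist_comm A B := by rw [symmDiff_comm]
  edist_triangle A B C :=
    (measure_mono (symmDiff_triangle A B C)).trans (measure_union_le _ _)

theorem completeSpace_symmDiffPseudoEMetricSpace (m : OuterMeasure α) :
    @CompleteSpace (Set α) (symmDiffPseudoEMetricSpace m).toUniformSpace := by
  let _ := symmDiffPseudoEMetricSpace m
  refine EMetric.complete_of_convergent_controlled_sequences (fun n ↦ 2⁻¹ ^ n)
    (fun n ↦ ENNReal.pow_pos (by simp) n) fun A hA ↦ ⟨limsup A atTop, ?_⟩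
  have htail (k : ℕ) : edist (A k) (limsup A atTop) ≤ 2⁻¹ ^ k * 2 := calc
    m (A k ∆ limsup A atTop) ≤ m (⋃ j, A (k + j) ∆ A (k + j + 1)) :=
      measure_mono (symmDiff_limsup_subset_iUnion A k)
    _ ≤ ∑' j, m (A (k + j) ∆ A (k + j + 1)) := measure_iUnion_le _
    _ ≤ ∑' j, 2⁻¹ ^ k * 2⁻¹ ^ j := ENNReal.tsum_le_tsum fun j ↦ by
      rw [← pow_add]
      exact (hA (k + j) (k + j) (k + j + 1) le_rfl (Nat.le_succ _)).le
    _ = 2⁻¹ ^ k * 2 := by rw [ENNReal.tsum_mul_left, ENNReal.tsum_geometric_two]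
  rw [tendsto_iff_edist_tendsto_0]
  have hzero : Tendsto (fun k : ℕ ↦ (2⁻¹ : ℝ≥0∞) ^ k * 2) atTop (𝓝 (0 * 2)) :=
    ENNReal.Tendsto.mul_const
      (ENNReal.tendsto_pow_atTop_nhds_zero_of_lt_one (by simp)) (by simp)
  rw [zero_mul] at hzero
  exact tendsto_of_tendsto_of_tendsto_of_le_of_le tendsto_const_nhds hzero
    (fun _ ↦ zero_le) htail

theorem outerMeasure_symmDiff_triangle (m : OuterMeasure α) (A B C : Set α) :
    m (A ∆ C) ≤ m (A ∆ B) + m (B ∆ C) :=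
  (symmDiffPseudoEMetricSpace m).edist_triangle A B C

theorem outerMeasure_symmDiff_lt_top (m : OuterMeasure α) {A B : Set α} (hA : m A < ∞)
    (hB : m B < ∞) : m (A ∆ B) < ∞ :=
  calc m (A ∆ B) ≤ m (A ∪ B) := measure_mono symmDiff_le_sup
    _ ≤ m A + m B := measure_union_le A B
    _ < ∞ := ENNReal.add_lt_top.2 ⟨hA, hB⟩

theorem exists_outerMeasure_symmDiff_tendsto_zero (m : OuterMeasure α) {A : ℕ → Set α}
    (hA : ∀ ε : ℝ, 0 < ε → ∃ N, ∀ i ≥ N, ∀ j ≥ N, m (A i ∆ A j) < ENNReal.ofReal ε) :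
    ∃ B, Tendsto (fun i ↦ m (A i ∆ B)) atTop (𝓝 0) := by
  let _ := symmDiffPseudoEMetricSpace m
  have := completeSpace_symmDiffPseudoEMetricSpace m
  have hcauchy : CauchySeq A := by
    refine EMetric.cauchySeq_iff.2 fun ε hε ↦ ?_
    obtain ⟨δ, hδ, hδε⟩ := ENNReal.lt_iff_exists_nnreal_btwn.1 hε
    obtain ⟨N, hN⟩ := hA δ (by exact_mod_cast hδ)
    refine ⟨N, fun i hi j hj ↦ (hN i hi j hj).trans ?_⟩
    rwa [ENNReal.ofReal_coe_nnreal]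
  obtain ⟨B, hB⟩ := cauchySeq_tendsto_of_complete hcauchy
  exact ⟨B, tendsto_iff_edist_tendsto_0.1 hB⟩

theorem exists_subset_outerMeasure_symmDiff_tendsto_zero (m : OuterMeasure α) {Ω : Set α}
    {A : ℕ → Set α} (hΩ : ∀ i, A i ⊆ Ω) (hfin : ∀ i, m (A i) < ∞)
    (hA : ∀ ε : ℝ, 0 < ε → ∃ N, ∀ i ≥ N, ∀ j ≥ N, m (A i ∆ A j) < ENNReal.ofReal ε) :
    ∃ B ⊆ Ω, m B < ∞ ∧ Tendsto (fun i ↦ m (A i ∆ B)) atTop (𝓝 0) := by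
  obtain ⟨B, hB⟩ := exists_outerMeasure_symmDiff_tendsto_zero m hA
  have hsub (i : ℕ) : A i ∆ (B ∩ Ω) ⊆ A i ∆ B := by
    intro x hx
    have := @hΩ i x
    simp only [Set.mem_symmDiff, mem_inter_iff] at hx ⊢
    tauto
  have hlim : Tendsto (fun i ↦ m (A i ∆ (B ∩ Ω))) atTop (𝓝 0) :=
    tendsto_of_tendsto_of_tendsto_of_le_of_le tendsto_const_nhds hB (fun _ ↦ zero_le)
      fun i ↦ measure_mono (hsub i)
  obtain ⟨i, hi⟩ := (hlim.eventually_lt_const ENNReal.zero_lt_top).exists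
  refine ⟨B ∩ Ω, inter_subset_right, ?_, hlim⟩
  rw [← symmDiff_symmDiff_cancel_left (A i) (B ∩ Ω)]
  exact outerMeasure_symmDiff_lt_top m (hfin i) hi

end SymmDiffMetric

/-! ### Doubling measures -/

theorem totallyBounded_of_forall_seq_exists_dist_lt {Y : Type*} [PseudoMetricSpace Y] {s : Set Y}
    (h : ∀ ε > 0, ∀ u : ℕ → Y, (∀ n, u n ∈ s) → ∃ m n, m < n ∧ dist (u n) (u m) < ε) :
    TotallyBounded s := by
  rw [Metric.totallyBounded_iff]
  intro ε hε
  by_contra! hcover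
  have hfar (t : Set Y) (ht : t.Finite) : ∃ y, y ∈ s ∧ ∀ z ∈ t, ε ≤ dist y z := by
    obtain ⟨y, hys, hy⟩ := not_subset.1 (hcover t ht)
    simp only [mem_iUnion, not_exists, mem_ball, not_lt] at hy
    exact ⟨y, hys, hy⟩
  obtain ⟨u, hu⟩ := seq_of_forall_finite_exists hfar
  obtain ⟨m, n, hmn, hlt⟩ := h ε hε u fun n ↦ (hu n).1
  exact hlt.not_ge ((hu n).2 (u m) (mem_image_of_mem u hmn))

namespace Doubling

section

variable {Y : Type*} [MetricSpace Y] [MeasurableSpace Y] {μ : Measure Y} {Cd : ℝ}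

theorem measure_ball_pos (hD : Doubling μ Cd) (x : Y) {r : ℝ} (hr : 0 < r) : 0 < μ (ball x r) := by
  simpa only [mul_div_cancel₀ r two_ne_zero] using (hD.2 x (r / 2) (half_pos hr)).1

theorem measure_ball_lt_top (hD : Doubling μ Cd) (x : Y) (r : ℝ) : μ (ball x r) < ∞ := by
  rcases lt_or_ge 0 r with hr | hr
  · exact (hD.2 x r hr).2.2
  · simp only [ball_eq_empty.2 hr, measure_empty, ENNReal.zero_lt_top]

theorem measure_ball_two_mul_le (hD : Doubling μ Cd) (x : Y) {r : ℝ} (hr : 0 < r) :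
    μ (ball x (2 * r)) ≤ ENNReal.ofReal Cd * μ (ball x r) :=
  (hD.2 x r hr).2.1

theorem measure_ball_two_pow_mul_le (hD : Doubling μ Cd) (x : Y) {r : ℝ} (hr : 0 < r) (k : ℕ) :
    μ (ball x (2 ^ k * r)) ≤ ENNReal.ofReal Cd ^ k * μ (ball x r) := by
  induction k with
  | zero => simp
  | succ k ih =>
    rw [pow_succ' (2 : ℝ), mul_assoc, pow_succ', mul_assoc]
    exact (hD.measure_ball_two_mul_le x (by positivity)).trans (by gcongr)

theorem measure_closedBall_le (hD : Doubling μ Cd) (x : Y) {r : ℝ} (hr : 0 < r) :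
    μ (closedBall x r) ≤ ENNReal.ofReal Cd * μ (ball x r) :=
  (measure_mono (closedBall_subset_ball (by linarith))).trans (hD.measure_ball_two_mul_le x hr)

theorem isLocallyFiniteMeasure (hD : Doubling μ Cd) : IsLocallyFiniteMeasure μ :=
  ⟨fun x ↦ ⟨ball x 1, ball_mem_nhds x one_pos, hD.measure_ball_lt_top x 1⟩⟩

theorem isUnifLocDoublingMeasure (hD : Doubling μ Cd) : IsUnifLocDoublingMeasure μ := by
  refine ⟨⟨Cd.toNNReal ^ 2, ?_⟩⟩
  filter_upwards [self_mem_nhdsWithin] with ε (hε : 0 < ε) x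
  calc μ (closedBall x (2 * ε)) ≤ μ (ball x (2 ^ 2 * ε)) :=
        measure_mono (closedBall_subset_ball (by linarith))
    _ ≤ ENNReal.ofReal Cd ^ 2 * μ (ball x ε) := hD.measure_ball_two_pow_mul_le x hε 2
    _ ≤ ENNReal.ofReal Cd ^ 2 * μ (closedBall x ε) := by gcongr; exact ball_subset_closedBall
    _ = ↑(Cd.toNNReal ^ 2) * μ (closedBall x ε) := by push_cast; rfl

theorem exists_pos_forall_le_measure_ball (hD : Doubling μ Cd) (x : Y) (R : ℝ) {r : ℝ}
    (hr : 0 < r) : ∃ c > 0, ∀ y ∈ closedBall x R, c ≤ μ (ball y r) := by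
  obtain ⟨k, hk⟩ := pow_unbounded_of_one_lt ((R + 1) / r) (one_lt_two (α := ℝ))
  rw [div_lt_iff₀ hr] at hk
  refine ⟨μ (ball x 1) / ENNReal.ofReal Cd ^ k,
    ENNReal.div_pos (hD.measure_ball_pos x one_pos).ne' (by finiteness), fun y hy ↦ ?_⟩
  refine ENNReal.div_le_of_le_mul' ?_
  refine (measure_mono (ball_subset_ball' ?_)).trans (hD.measure_ball_two_pow_mul_le y hr k)
  linarith [mem_closedBall'.1 hy]

end

variable {μ : Measure X} {Cd : ℝ}

theorem exists_dist_lt_of_mem_closedBall (hD : Doubling μ Cd) {x : X} {R ε : ℝ} (hε : 0 < ε)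
    {u : ℕ → X} (hu : ∀ n, u n ∈ closedBall x R) : ∃ m n, m < n ∧ dist (u n) (u m) < ε := by
  by_contra! hsep
  obtain ⟨c, hc, hcu⟩ := hD.exists_pos_forall_le_measure_ball x R (half_pos hε)
  have hdisj : Pairwise (Function.onFun Disjoint fun n ↦ ball (u n) (ε / 2)) := by
    refine (pairwise_disjoint_on _).2 fun m n hmn ↦ ball_disjoint_ball ?_
    rw [add_halves, dist_comm]
    exact hsep m n hmn
  have hsub : ⋃ n, ball (u n) (ε / 2) ⊆ ball x (R + ε) :=
    iUnion_subset fun n ↦ ball_subset_ball' (by linarith [mem_closedBall.1 (hu n)])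
  have hfinite := Measure.finite_const_le_meas_of_disjoint_iUnion μ hc
    (fun n ↦ measurableSet_ball) hdisj
    ((measure_mono hsub).trans_lt (hD.measure_ball_lt_top x (R + ε))).ne
  exact infinite_univ (hfinite.subset fun n _ ↦ hcu (u n) (hu n))

theorem properSpace [CompleteSpace X] (hD : Doubling μ Cd) : ProperSpace X :=
  ⟨fun _ _ ↦ TotallyBounded.isCompact_of_isClosed
    (totallyBounded_of_forall_seq_exists_dist_lt fun _ hε _ hu ↦
      hD.exists_dist_lt_of_mem_closedBall hε hu) isClosed_closedBall⟩

end Doubling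

/-! ### The Hardy–Littlewood maximal function -/

section MaximalFunction

variable {Y : Type*} [MetricSpace Y] [MeasurableSpace Y]

/-- The centred Hardy–Littlewood maximal function of a nonnegative function, over open balls of
all radii. -/
def maximalFunction (μ : Measure Y) (g : Y → ℝ≥0∞) (x : Y) : ℝ≥0∞ :=
  ⨆ (r : ℝ) (_ : 0 < r), ⨍⁻ y in ball x r, g y ∂μ

theorem laverage_ball_le_maximalFunction (μ : Measure Y) (g : Y → ℝ≥0∞) (x : Y) {r : ℝ}
    (hr : 0 < r) : ⨍⁻ y in ball x r, g y ∂μ ≤ maximalFunction μ g x :=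
  le_iSup₂ (f := fun r (_ : 0 < r) ↦ ⨍⁻ y in ball x r, g y ∂μ) r hr

theorem maximalFunction_mono (μ : Measure Y) {g h : Y → ℝ≥0∞} (hgh : g ≤ h) :
    maximalFunction μ g ≤ maximalFunction μ h :=
  fun _ ↦ iSup₂_mono fun _ _ ↦ lintegral_mono hgh

theorem maximalFunction_add_one_le (μ : Measure Y) (g : Y → ℝ≥0∞) (x : Y) :
    maximalFunction μ (g + 1) x ≤ maximalFunction μ g x + 1 := by
  refine iSup₂_le fun r hr ↦ ?_
  simp only [Pi.add_apply, Pi.one_apply]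
  rw [setLAverage_eq, lintegral_add_right _ measurable_const, ENNReal.add_div, ← setLAverage_eq,
    setLIntegral_one]
  exact add_le_add (laverage_ball_le_maximalFunction μ g x hr) ENNReal.div_self_le_one

theorem Doubling.laverage_ball_le {μ : Measure Y} {Cd : ℝ} (hD : Doubling μ Cd) (g : Y → ℝ≥0∞)
    (x : Y) {r : ℝ} (hr : 0 < r) :
    ⨍⁻ y in ball x r, g y ∂μ ≤ ENNReal.ofReal Cd * ⨍⁻ y in closedBall x r, g y ∂μ := by
  have hpos : μ (closedBall x r) ≠ 0 :=
    ((hD.measure_ball_pos x hr).trans_le (measure_mono ball_subset_closedBall)).ne'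
  have hfin : μ (closedBall x r) ≠ ∞ := ((hD.measure_closedBall_le x hr).trans_lt
    (ENNReal.mul_lt_top ENNReal.ofReal_lt_top (hD.measure_ball_lt_top x r))).ne
  rw [setLAverage_eq]
  refine ENNReal.div_le_of_le_mul ?_
  calc ∫⁻ y in ball x r, g y ∂μ ≤ ∫⁻ y in closedBall x r, g y ∂μ :=
        lintegral_mono_set ball_subset_closedBall
    _ = (⨍⁻ y in closedBall x r, g y ∂μ) * μ (closedBall x r) := by
        rw [setLAverage_eq, ENNReal.div_mul_cancel hpos hfin]
    _ ≤ (⨍⁻ y in closedBall x r, g y ∂μ) * (ENNReal.ofReal Cd * μ (ball x r)) := by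
        gcongr; exact hD.measure_closedBall_le x hr
    _ = ENNReal.ofReal Cd * (⨍⁻ y in closedBall x r, g y ∂μ) * μ (ball x r) := by ring

end MaximalFunction

namespace Doubling

variable [CompleteSpace X] {μ : Measure X} {Cd : ℝ} {g : X → ℝ≥0∞}

theorem ae_tendsto_laverage_closedBall (hD : Doubling μ Cd) (hg : AEMeasurable g μ)
    (hfin : ∫⁻ x, g x ∂μ ≠ ∞) :
    ∀ᵐ x ∂μ, Tendsto (fun r ↦ ⨍⁻ y in closedBall x r, g y ∂μ) (𝓝[>] 0) (𝓝 (g x)) := by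
  have := hD.properSpace
  have := hD.isLocallyFiniteMeasure
  have := hD.isUnifLocDoublingMeasure
  filter_upwards [(IsUnifLocDoublingMeasure.vitaliFamily μ 1).ae_tendsto_lintegral_div hg hfin]
    with x hx
  simp only [setLAverage_eq]
  refine hx.comp (IsUnifLocDoublingMeasure.tendsto_closedBall_filterAt μ
    (fun _ ↦ x) id tendsto_id ?_)
  filter_upwards [self_mem_nhdsWithin] with r (hr : 0 < r)
  simpa using hr.le

theorem ae_maximalFunction_lt_top (hD : Doubling μ Cd) (hg : AEMeasurable g μ)
    (hfin : ∫⁻ x, g x ∂μ ≠ ∞) : ∀ᵐ x ∂μ, maximalFunction μ g x < ∞ := by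
  filter_upwards [hD.ae_tendsto_laverage_closedBall hg hfin, ae_lt_top' hg hfin] with x hx hgx
  obtain ⟨R, hR : 0 < R, hsmall⟩ := mem_nhdsGT_iff_exists_Ioo_subset.1
    (hx.eventually_lt_const (ENNReal.lt_add_right hgx.ne one_ne_zero))
  have hbound (r : ℝ) (hr : 0 < r) : ⨍⁻ y in ball x r, g y ∂μ ≤
      max (ENNReal.ofReal Cd * (g x + 1)) ((∫⁻ y, g y ∂μ) / μ (ball x R)) := by
    rcases lt_or_ge r R with hrR | hRr
    · refine ((hD.laverage_ball_le g x hr).trans ?_).trans (le_max_left _ _)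
      gcongr
      exact (hsmall ⟨hr, hrR⟩).le
    · refine le_trans ?_ (le_max_right _ _)
      rw [setLAverage_eq]
      exact ENNReal.div_le_div (setLIntegral_le_lintegral _ _) (measure_mono (ball_subset_ball hRr))
  refine (iSup₂_le hbound).trans_lt (max_lt (by finiteness) ?_)
  exact ENNReal.div_lt_top hfin (hD.measure_ball_pos x hR).ne'

end Doubling

/-! ### Pointwise consequences of the Poincaré inequality -/

section Average

variable {α : Type*} [MeasurableSpace α] {μ : Measure α} {s t : Set α} {f : α → ℝ}

theorem abs_setAverage_sub_le_setAverage_abs_sub (hs₀ : μ s ≠ 0) (hs : μ s ≠ ∞)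
    (hf : IntegrableOn f s μ) (c : ℝ) :
    |(⨍ y in s, f y ∂μ) - c| ≤ ⨍ y in s, |f y - c| ∂μ := by
  have hc : IntegrableOn (fun _ ↦ c) s μ := integrableOn_const hs
  have hsub : (⨍ y in s, f y ∂μ) - c = ⨍ y in s, (f y - c) ∂μ := by
    conv_lhs => rw [← setAverage_const hs₀ hs c]
    simp only [setAverage_eq, integral_sub hf hc, smul_sub]
  rw [hsub, setAverage_eq, setAverage_eq, smul_eq_mul, smul_eq_mul, abs_mul,
    abs_of_nonneg (inv_nonneg.2 measureReal_nonneg)]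
  gcongr
  exact abs_integral_le_integral_abs

theorem setAverage_le_mul_setAverage_of_subset {c : ℝ≥0} (hst : s ⊆ t) (hs₀ : μ s ≠ 0)
    (ht : μ t ≠ ∞) (hμ : μ t ≤ c * μ s) (hf : IntegrableOn f t μ) (hf₀ : 0 ≤ f) :
    ⨍ y in s, f y ∂μ ≤ c * ⨍ y in t, f y ∂μ := by
  have hs : μ s ≠ ∞ := ((measure_mono hst).trans_lt ht.lt_top).ne
  have hspos : 0 < μ.real s := ENNReal.toReal_pos hs₀ hs
  have hμreal : μ.real t ≤ c * μ.real s := by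
    simpa [measureReal_def] using ENNReal.toReal_mono (by finiteness) hμ
  have havg : 0 ≤ ⨍ y in t, f y ∂μ := integral_nonneg hf₀
  rw [setAverage_eq, smul_eq_mul, inv_mul_le_iff₀ hspos]
  calc ∫ y in s, f y ∂μ ≤ ∫ y in t, f y ∂μ :=
        setIntegral_mono_set hf (ae_of_all _ hf₀) hst.eventuallyLE
    _ = μ.real t * ⨍ y in t, f y ∂μ := (measure_smul_setAverage f ht).symm
    _ ≤ c * μ.real s * ⨍ y in t, f y ∂μ := by gcongr
    _ = μ.real s * (c * ⨍ y in t, f y ∂μ) := by ring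

end Average

section PoincareEstimates

variable [ProperSpace X] {μ : Measure X} {Cd CP lam : ℝ} {u : X → ℝ} {g : X → ℝ≥0∞}

theorem Doubling.integrableOn_ball (hD : Doubling μ Cd) (hu : Continuous u) (x : X) (r : ℝ) :
    IntegrableOn u (ball x r) μ := by
  have := hD.isLocallyFiniteMeasure
  exact (hu.locallyIntegrable.integrableOn_isCompact (isCompact_closedBall x r)).mono_set
    ball_subset_closedBall

theorem Doubling.memL1Loc (hD : Doubling μ Cd) (hu : Continuous u) : MemL1Loc μ univ u := by
  refine ⟨hu.measurable.aemeasurable, fun x _ ↦ ⟨1, one_pos, ?_⟩⟩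
  rw [univ_inter]
  exact (hD.integrableOn_ball hu x 1).abs.lintegral_lt_top

theorem Doubling.tendsto_setAverage_ball (hD : Doubling μ Cd) (hu : Continuous u) (x : X) :
    Tendsto (fun r ↦ ⨍ y in ball x r, u y ∂μ) (𝓝[>] 0) (𝓝 (u x)) := by
  refine (nhds_basis_closedBall.tendsto_right_iff).2 fun δ hδ ↦ ?_
  obtain ⟨ρ, hρ, hball⟩ := Metric.continuous_iff.1 hu x δ hδ
  filter_upwards [Ioo_mem_nhdsGT hρ] with r hr
  refine (convex_closedBall (u x) δ).set_average_mem isClosed_closedBall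
    (hD.measure_ball_pos x hr.1).ne' (hD.measure_ball_lt_top x r).ne ?_
    (hD.integrableOn_ball hu x r)
  filter_upwards [ae_restrict_mem measurableSet_ball] with y hy
  exact (hball y ((mem_ball.1 hy).trans hr.2)).le

theorem Poincare.setAverage_abs_sub_setAverage_le (hP : Poincare μ CP lam) (hD : Doubling μ Cd)
    (hu : Continuous u) (hug : IsUpperGradient u g) {x : X} {m : ℝ≥0}
    (hm : maximalFunction μ g x ≤ m) {r : ℝ} (hr : 0 < r) :
    ⨍ y in ball x r, |u y - ⨍ z in ball x r, u z ∂μ| ∂μ ≤ CP * r * m := by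
  obtain ⟨hCP, hlam, hpoincare⟩ := hP
  have hCPr : 0 ≤ CP * r := by positivity
  rw [← ENNReal.ofReal_le_ofReal_iff (by positivity), ENNReal.ofReal_mul hCPr,
    ENNReal.ofReal_coe_nnreal]
  refine (hpoincare x r hr u g (hD.memL1Loc hu) hug).trans ?_
  rw [← setLAverage_eq]
  gcongr
  exact (laverage_ball_le_maximalFunction μ g x (by positivity)).trans hm

theorem Poincare.abs_setAverage_sub_setAverage_le (hP : Poincare μ CP lam) (hD : Doubling μ Cd)
    (hu : Continuous u) (hug : IsUpperGradient u g) {x : X} {m : ℝ≥0}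
    (hm : maximalFunction μ g x ≤ m) {z : X} {r r' : ℝ} {c : ℝ≥0} (hr : 0 < r) (hr' : 0 < r')
    (hsub : ball z r' ⊆ ball x r) (hμ : μ (ball x r) ≤ c * μ (ball z r')) :
    |(⨍ y in ball z r', u y ∂μ) - ⨍ y in ball x r, u y ∂μ| ≤ c * (CP * r * m) := by
  set a := ⨍ y in ball x r, u y ∂μ
  have hr₀ := (hD.measure_ball_pos z hr').ne'
  have hfin := (hD.measure_ball_lt_top x r).ne
  calc |(⨍ y in ball z r', u y ∂μ) - a| ≤ ⨍ y in ball z r', |u y - a| ∂μ :=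
        abs_setAverage_sub_le_setAverage_abs_sub hr₀ (hD.measure_ball_lt_top z r').ne
          (hD.integrableOn_ball hu z r') a
    _ ≤ c * ⨍ y in ball x r, |u y - a| ∂μ :=
        setAverage_le_mul_setAverage_of_subset hsub hr₀ hfin hμ
          (hD.integrableOn_ball (by fun_prop) x r) fun _ ↦ abs_nonneg _
    _ ≤ c * (CP * r * m) := by
        gcongr
        exact hP.setAverage_abs_sub_setAverage_le hD hu hug hm hr

theorem Poincare.abs_setAverage_ball_sub_le (hP : Poincare μ CP lam) (hD : Doubling μ Cd)
    (hu : Continuous u) (hug : IsUpperGradient u g) {x : X} {m : ℝ≥0}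
    (hm : maximalFunction μ g x ≤ m) {r : ℝ} (hr : 0 < r) :
    |(⨍ y in ball x r, u y ∂μ) - u x| ≤ 2 * (Cd * (CP * r * m)) := by
  have hCd : 0 ≤ Cd := zero_le_one.trans hD.1
  set a : ℕ → ℝ := fun k ↦ ⨍ y in ball x (r / 2 ^ k), u y ∂μ
  have hstep (k : ℕ) : dist (a k) (a (k + 1)) ≤ 2 * (Cd * (CP * r * m)) / 2 / 2 ^ k := by
    have hdouble : r / 2 ^ k = 2 * (r / 2 ^ (k + 1)) := by field_simp; ring
    have hle := hP.abs_setAverage_sub_setAverage_le hD hu hug hm (z := x) (c := Cd.toNNReal)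
      (r := r / 2 ^ k) (r' := r / 2 ^ (k + 1)) (by positivity) (by positivity)
      (ball_subset_ball (by gcongr <;> simp))
      (by rw [hdouble]; exact hD.measure_ball_two_mul_le x (by positivity))
    rw [dist_comm, Real.dist_eq]
    refine hle.trans_eq ?_
    rw [Real.coe_toNNReal _ hCd]
    ring
  have hradius : Tendsto (fun k : ℕ ↦ r / 2 ^ k) atTop (𝓝[>] 0) :=
    tendsto_nhdsWithin_iff.2 ⟨tendsto_const_nhds.div_atTop
      (tendsto_pow_atTop_atTop_of_one_lt one_lt_two), .of_forall fun k ↦ by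
        rw [mem_Ioi]; positivity⟩
  have hlim : Tendsto a atTop (𝓝 (u x)) := (hD.tendsto_setAverage_ball hu x).comp hradius
  simpa [a, Real.dist_eq] using dist_le_of_le_geometric_two_of_tendsto₀ hstep hlim

/-- The factor `C(Cd, CP)` in the estimate `|u x - u y| ≤ C m d(x, y)` between points where the
maximal function of an upper gradient is at most `m`. The first summand comes from telescoping
averages at `x` (radius `2 d(x, y)`) and `y` (radius `d(x, y)`), the second from comparing the
averages over the two balls. -/
def maximalLipschitzConst (Cd CP : ℝ) : ℝ≥0 := (6 * Cd * CP + 2 * Cd ^ 2 * CP).toNNReal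

theorem Poincare.dist_le_of_maximalFunction_le (hP : Poincare μ CP lam) (hD : Doubling μ Cd)
    (hu : Continuous u) (hug : IsUpperGradient u g) {x y : X} {m : ℝ≥0}
    (hx : maximalFunction μ g x ≤ m) (hy : maximalFunction μ g y ≤ m) :
    dist (u x) (u y) ≤ maximalLipschitzConst Cd CP * m * dist x y := by
  have hCd : 0 ≤ Cd := zero_le_one.trans hD.1
  have hCP : 0 ≤ CP := zero_le_one.trans hP.1
  rcases eq_or_ne x y with rfl | hne
  · simp
  have hr : 0 < dist x y := dist_pos.2 hne
  set r := dist x y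
  have hμ : μ (ball x (2 * r)) ≤ ↑(Cd.toNNReal ^ 2) * μ (ball y r) := by
    push_cast
    exact (measure_mono (ball_subset_ball' (by linarith))).trans
      (hD.measure_ball_two_pow_mul_le y hr 2)
  have hballs := hP.abs_setAverage_sub_setAverage_le hD hu hug hx (by positivity) hr
    (ball_subset_ball' (by rw [dist_comm]; linarith)) hμ
  have hux := hP.abs_setAverage_ball_sub_le hD hu hug hx (show 0 < 2 * r by positivity)
  have huy := hP.abs_setAverage_ball_sub_le hD hu hug hy hr
  rw [maximalLipschitzConst, Real.coe_toNNReal _ (by positivity), Real.dist_eq]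
  rw [NNReal.coe_pow, Real.coe_toNNReal _ hCd] at hballs
  rw [abs_le] at hballs hux huy ⊢
  constructor <;> linarith

end PoincareEstimates

/-! ### Coarse paths and the weighted coarse distance -/

section Curve

variable {Y : Type*} [MetricSpace Y]

/-- The curve traversed backwards. -/
def Curve.reverse (γ : Curve Y) : Curve Y where
  len := γ.len
  len_nonneg := γ.len_nonneg
  toFun t := γ.toFun (γ.len - t)
  lip := by
    have hreflect : LipschitzWith 1 fun t : ℝ ↦ γ.len - t :=
      LipschitzWith.of_dist_le_mul fun s t ↦ by rw [dist_sub_left]; simp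
    simpa only [one_mul, Function.comp_def] using
      γ.lip.comp hreflect.lipschitzOnWith fun t ht ↦ ⟨by linarith [ht.2], by linarith [ht.1]⟩

theorem Curve.integral_reverse (γ : Curve Y) (g : Y → ℝ≥0∞) :
    γ.reverse.integral g = γ.integral g := by
  have hIcc : (γ.len - ·) ⁻¹' Icc 0 γ.len = Icc 0 γ.len := by simp
  simp only [Curve.integral, ← lintegral_indicator measurableSet_Icc]
  rw [← lintegral_sub_left_eq_self ((Icc 0 γ.len).indicator fun t ↦ g (γ.toFun t)) γ.len]
  refine lintegral_congr fun t ↦ ?_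
  rw [← indicator_comp_right (s := Icc 0 γ.len) fun t ↦ γ.len - t, hIcc]
  rfl

/-- The curve extended to the whole line so that it is constant outside `[0, len]`. -/
def Curve.extend (γ : Curve Y) : ℝ → Y :=
  IccExtend γ.len_nonneg (domRestrict (Icc 0 γ.len) γ.toFun)

theorem Curve.lipschitzWith_extend (γ : Curve Y) : LipschitzWith 1 γ.extend := by
  rw [← one_mul (1 : ℝ≥0)]
  exact γ.lip.to_restrict.comp (.projIcc γ.len_nonneg)

theorem Curve.extend_of_le_zero (γ : Curve Y) {t : ℝ} (ht : t ≤ 0) :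
    γ.extend t = γ.toFun 0 :=
  IccExtend_of_le_left _ _ ht

theorem Curve.extend_of_len_le (γ : Curve Y) {t : ℝ} (ht : γ.len ≤ t) :
    γ.extend t = γ.toFun γ.len :=
  IccExtend_of_right_le _ _ ht

theorem Curve.extend_of_mem (γ : Curve Y) {t : ℝ} (ht : t ∈ Icc 0 γ.len) :
    γ.extend t = γ.toFun t :=
  IccExtend_of_mem _ _ ht

end Curve

theorem lintegral_Ico_append_le {α : Type*} [MeasurableSpace α] {S T : ℝ} {f p : ℝ → α}
    {g : α → ℝ≥0∞} (hg : Measurable g) (hf : Measurable f) :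
    ∫⁻ t in Ico 0 (S + T), g (if t < S then f t else p (t - S)) ≤
      (∫⁻ t in Ico 0 S, g (f t)) + ∫⁻ t in Ico 0 T, g (p t) := by
  simp only [← lintegral_indicator measurableSet_Ico]
  rw [← lintegral_sub_right_eq_self ((Ico 0 T).indicator fun t ↦ g (p t)) S,
    ← lintegral_add_left (f := (Ico 0 S).indicator fun t ↦ g (f t))
      ((hg.comp hf).indicator measurableSet_Ico)]
  refine lintegral_mono fun t ↦ indicator_apply_le' (fun ht ↦ ?_) (fun _ ↦ zero_le)
  by_cases hlt : t < S
  · simp [hlt, ht.1]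
  · have hmem : t - S ∈ Ico 0 T := ⟨by linarith, by linarith [ht.2]⟩
    simp [hlt, indicator_of_mem hmem]

theorem ofReal_abs_toReal_min_sub_toReal_min_le {a b c : ℝ≥0∞} (K : ℝ≥0) (hab : a ≤ b + c)
    (hba : b ≤ a + c) : ENNReal.ofReal |(min a K).toReal - (min b K).toReal| ≤ c := by
  have hone_sided {a b : ℝ≥0∞} (h : a ≤ b + c) :
      ENNReal.ofReal ((min a K).toReal - (min b K).toReal) ≤ c := by
    have hfin (d : ℝ≥0∞) : min d K ≠ ∞ := ne_top_of_le_ne_top ENNReal.coe_ne_top (min_le_right d _)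
    rw [ENNReal.ofReal_sub _ ENNReal.toReal_nonneg, ENNReal.ofReal_toReal (hfin a),
      ENNReal.ofReal_toReal (hfin b), tsub_le_iff_left, add_comm, ← min_add_add_left]
    exact min_le_min (add_comm b c ▸ h) le_add_self
  rcases abs_choice ((min a K).toReal - (min b K).toReal) with h | h <;> rw [h]
  · exact hone_sided hab
  · rw [neg_sub]
    exact hone_sided hba

section CoarsePath

variable {Y : Type*} [MetricSpace Y] [MeasurableSpace Y] {ε S T : ℝ} {x y z : Y} {f p : ℝ → Y}
  {g : Y → ℝ≥0∞}

/-- A possibly discontinuous path from `x` to `y`, traversed on `[0, S]` and constant outside,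
which is `1`-Lipschitz up to the additive error `ε`. -/
structure IsCoarsePath (ε : ℝ) (x y : Y) (S : ℝ) (f : ℝ → Y) : Prop where
  nonneg : 0 ≤ S
  measurable : Measurable f
  eq_left : ∀ t ≤ 0, f t = x
  eq_right : ∀ t, S ≤ t → f t = y
  dist_le : ∀ s t, dist (f s) (f t) ≤ dist s t + ε

/-- The infimum of `∫ g ds` over the `ε`-coarse paths from `x` to `y`. -/
def coarseDist (g : Y → ℝ≥0∞) (ε : ℝ) (x y : Y) : ℝ≥0∞ :=
  ⨅ (S : ℝ) (f : ℝ → Y) (_ : IsCoarsePath ε x y S f), ∫⁻ t in Ico 0 S, g (f t)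

theorem IsCoarsePath.coarseDist_le (hf : IsCoarsePath ε x y S f) (g : Y → ℝ≥0∞) :
    coarseDist g ε x y ≤ ∫⁻ t in Ico 0 S, g (f t) :=
  iInf₂_le_of_le S f (iInf_le_of_le hf le_rfl)

theorem isCoarsePath_const (hε : 0 ≤ ε) (x : Y) : IsCoarsePath ε x x 0 fun _ ↦ x where
  nonneg := le_rfl
  measurable := measurable_const
  eq_left _ _ := rfl
  eq_right _ _ := rfl
  dist_le s t := by rw [dist_self]; positivity

theorem coarseDist_self (hε : 0 ≤ ε) (g : Y → ℝ≥0∞) (x : Y) : coarseDist g ε x x = 0 :=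
  le_antisymm (((isCoarsePath_const hε x).coarseDist_le g).trans (by simp)) zero_le

theorem isCoarsePath_jump (hd : dist y z ≤ ε) :
    IsCoarsePath ε y z (dist y z) fun t ↦ if t < dist y z then y else z where
  nonneg := dist_nonneg
  measurable := Measurable.ite measurableSet_Iio measurable_const measurable_const
  eq_left t ht := by
    split_ifs with hlt
    · rfl
    · exact (dist_le_zero.1 ((not_lt.1 hlt).trans ht)).symm
  eq_right t ht := if_neg ht.not_gt
  dist_le s t := by
    have hε : 0 ≤ ε := dist_nonneg.trans hd
    have hst : 0 ≤ dist s t := dist_nonneg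
    have hdzy : dist z y ≤ ε := dist_comm y z ▸ hd
    split_ifs <;> first | linarith | (rw [dist_self]; positivity)

theorem IsCoarsePath.append (hf : IsCoarsePath ε x y S f) (hp : IsCoarsePath ε y z T p)
    (hpy : ∀ t, 0 ≤ t → dist y (p t) ≤ t) :
    IsCoarsePath ε x z (S + T) fun t ↦ if t < S then f t else p (t - S) where
  nonneg := add_nonneg hf.nonneg hp.nonneg
  measurable := .ite measurableSet_Iio hf.measurable (hp.measurable.comp (measurable_sub_const S))
  eq_left t ht := by
    split_ifs with hlt
    · exact hf.eq_left t ht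
    · rw [hp.eq_left _ (by linarith [hf.nonneg]), ← hf.eq_right t (not_lt.1 hlt), hf.eq_left t ht]
  eq_right t ht := by
    rw [if_neg (by linarith [hp.nonneg]), hp.eq_right _ (by linarith)]
  dist_le s t := by
    have hcross {s t : ℝ} (hs : s < S) (ht : S ≤ t) :
        dist (f s) (p (t - S)) ≤ dist s t + ε := by
      have hfs : dist (f s) y ≤ S - s + ε := by
        simpa [hf.eq_right S le_rfl, Real.dist_eq, abs_of_neg (sub_neg.2 hs)] using hf.dist_le s S
      have hpt : dist y (p (t - S)) ≤ t - S := hpy _ (sub_nonneg.2 ht)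
      rw [dist_comm s, Real.dist_eq, abs_of_nonneg (by linarith)]
      linarith [dist_triangle (f s) y (p (t - S))]
    split_ifs with hs ht ht
    · exact hf.dist_le s t
    · exact hcross hs (not_lt.1 ht)
    · rw [dist_comm, dist_comm s]
      exact hcross ht (not_lt.1 hs)
    · simpa using hp.dist_le (s - S) (t - S)

theorem coarseDist_append_le (hg : Measurable g) (hp : IsCoarsePath ε y z T p)
    (hpy : ∀ t, 0 ≤ t → dist y (p t) ≤ t) (x : Y) :
    coarseDist g ε x z ≤ coarseDist g ε x y + ∫⁻ t in Ico 0 T, g (p t) := by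
  simp only [coarseDist, ENNReal.iInf_add]
  refine le_iInf fun S ↦ le_iInf₂ fun f hf ↦ ?_
  exact ((hf.append hp hpy).coarseDist_le g).trans (lintegral_Ico_append_le hg hf.measurable)

theorem coarseDist_le_add_of_dist_le (hg : Measurable g) {N : ℝ≥0} (hN : ∀ w, g w ≤ N)
    (hd : dist y z ≤ ε) (x : Y) :
    coarseDist g ε x z ≤ coarseDist g ε x y + N * ENNReal.ofReal (dist y z) := by
  refine (coarseDist_append_le hg (isCoarsePath_jump hd) (fun t ht ↦ ?_) x).trans ?_
  · split_ifs with hlt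
    · rwa [dist_self]
    · exact not_lt.1 hlt
  · gcongr
    exact (lintegral_mono fun t ↦ hN _).trans_eq (by simp)

/-- The coarse distance from `x`, truncated at height `K` so as to be real-valued. -/
def truncatedCoarseDist (g : Y → ℝ≥0∞) (ε : ℝ) (K : ℝ≥0) (x y : Y) : ℝ :=
  (min (coarseDist g ε x y) K).toReal

theorem dist_truncatedCoarseDist_le (hg : Measurable g) {N : ℝ≥0} (hN : ∀ w, g w ≤ N)
    (K : ℝ≥0) (x : Y) (hd : dist y z ≤ ε) :
    dist (truncatedCoarseDist g ε K x y) (truncatedCoarseDist g ε K x z) ≤ N * dist y z := by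
  rw [Real.dist_eq, ← ENNReal.ofReal_le_ofReal_iff (by positivity),
    ENNReal.ofReal_mul N.coe_nonneg, ENNReal.ofReal_coe_nnreal]
  refine ofReal_abs_toReal_min_sub_toReal_min_le K ?_ (coarseDist_le_add_of_dist_le hg hN hd x)
  rw [dist_comm] at hd ⊢
  exact coarseDist_le_add_of_dist_le hg hN hd x

theorem continuous_truncatedCoarseDist (hg : Measurable g) {N : ℝ≥0} (hN : ∀ w, g w ≤ N)
    (hε : 0 < ε) (K : ℝ≥0) (x : Y) : Continuous (truncatedCoarseDist g ε K x) := by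
  refine continuous_iff_continuousAt.2 fun y ↦ tendsto_iff_dist_tendsto_zero.2 ?_
  have hlim : Tendsto (fun z ↦ N * dist z y) (𝓝 y) (𝓝 0) :=
    (continuous_const.mul (continuous_id.dist continuous_const)).tendsto' _ _ (by simp)
  refine squeeze_zero' (.of_forall fun _ ↦ dist_nonneg) ?_ hlim
  filter_upwards [closedBall_mem_nhds y hε] with z hz
  exact dist_truncatedCoarseDist_le hg hN K x hz

end CoarsePath

section CoarseDist

variable {ε : ℝ} {x y : X} {g : X → ℝ≥0∞}

theorem Curve.isCoarsePath_extend (γ : Curve X) (hε : 0 ≤ ε) :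
    IsCoarsePath ε (γ.toFun 0) (γ.toFun γ.len) γ.len γ.extend where
  nonneg := γ.len_nonneg
  measurable := γ.lipschitzWith_extend.continuous.measurable
  eq_left _ := γ.extend_of_le_zero
  eq_right _ := γ.extend_of_len_le
  dist_le s t := by
    linarith [γ.lipschitzWith_extend.dist_le_mul s t, NNReal.coe_one ▸ one_mul (dist s t)]

theorem Curve.coarseDist_le_add_integral (γ : Curve X) (hg : Measurable g) (hε : 0 ≤ ε) (x : X) :
    coarseDist g ε x (γ.toFun γ.len) ≤ coarseDist g ε x (γ.toFun 0) + γ.integral g := by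
  refine (coarseDist_append_le hg (γ.isCoarsePath_extend hε) (fun t ht ↦ ?_) x).trans ?_
  · simpa [γ.extend_of_le_zero le_rfl, abs_of_nonneg ht] using
      γ.lipschitzWith_extend.dist_le_mul 0 t
  · gcongr
    calc ∫⁻ t in Ico 0 γ.len, g (γ.extend t) = ∫⁻ t in Ico 0 γ.len, g (γ.toFun t) :=
          setLIntegral_congr_fun measurableSet_Ico fun t ht ↦ by
            rw [γ.extend_of_mem (Ico_subset_Icc_self ht)]
      _ ≤ γ.integral g := lintegral_mono_set Ico_subset_Icc_self

theorem isUpperGradient_truncatedCoarseDist (hg : Measurable g) (hε : 0 ≤ ε) (K : ℝ≥0) (x : X) :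
    IsUpperGradient (truncatedCoarseDist g ε K x) g := by
  refine ⟨hg, fun γ ↦ ofReal_abs_toReal_min_sub_toReal_min_le K ?_
    (γ.coarseDist_le_add_integral hg hε x)⟩
  rw [← γ.integral_reverse]
  simpa only [Curve.reverse, sub_self, sub_zero] using
    γ.reverse.coarseDist_le_add_integral hg hε x

theorem Poincare.coarseDist_le [ProperSpace X] {μ : Measure X} {Cd CP lam : ℝ}
    (hP : Poincare μ CP lam) (hD : Doubling μ Cd) (hg : Measurable g) {N : ℝ≥0}
    (hN : ∀ w, g w ≤ N) (hε : 0 < ε) {m : ℝ≥0} (hx : maximalFunction μ g x ≤ m)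
    (hy : maximalFunction μ g y ≤ m) :
    coarseDist g ε x y ≤ ↑(maximalLipschitzConst Cd CP * m * nndist x y) := by
  set R : ℝ≥0 := maximalLipschitzConst Cd CP * m * nndist x y
  have hlip := hP.dist_le_of_maximalFunction_le hD
    (continuous_truncatedCoarseDist hg hN hε (R + 1) x)
    (isUpperGradient_truncatedCoarseDist hg hε.le (R + 1) x) hx hy
  have hmin : min (coarseDist g ε x y) ↑(R + 1) ≤ R := by
    rw [← ENNReal.ofReal_coe_nnreal (p := R)]
    refine (ENNReal.le_ofReal_iff_toReal_le (by simp) R.coe_nonneg).2 ?_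
    simpa [truncatedCoarseDist, coarseDist_self hε.le, R] using hlip
  refine (min_le_iff.1 hmin).resolve_right (not_le.2 ?_)
  exact_mod_cast lt_add_one R

end CoarseDist

/-! ### Limits of coarse paths -/

section CoarseArzelaAscoli

variable {T Y : Type*} [PseudoMetricSpace T] [MetricSpace Y] {f : ℕ → T → Y} {ε : ℕ → ℝ}

theorem lipschitzWith_one_of_tendsto_of_dist_le_dist_add {l : T → Y}
    (hε : Tendsto ε atTop (𝓝 0)) (hf : ∀ n s t, dist (f n s) (f n t) ≤ dist s t + ε n)
    (hl : ∀ t, Tendsto (f · t) atTop (𝓝 (l t))) : LipschitzWith 1 l := by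
  refine LipschitzWith.of_dist_le_mul fun s t ↦ ?_
  simpa using le_of_tendsto_of_tendsto' ((hl s).dist (hl t)) (hε.const_add (dist s t))
    fun n ↦ hf n s t

theorem cauchySeq_of_dense_of_dist_le_dist_add {D : Set T} (hD : Dense D)
    (hε : Tendsto ε atTop (𝓝 0)) (hf : ∀ n s t, dist (f n s) (f n t) ≤ dist s t + ε n)
    (hcauchy : ∀ q ∈ D, CauchySeq (f · q)) (t : T) : CauchySeq (f · t) := by
  refine Metric.cauchySeq_iff.2 fun δ hδ ↦ ?_
  obtain ⟨q, hq, hqD⟩ := hD.exists_dist_lt t (show 0 < δ / 5 by positivity)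
  obtain ⟨N₁, hN₁⟩ := Metric.cauchySeq_iff.1 (hcauchy q hq) (δ / 5) (by positivity)
  obtain ⟨N₂, hN₂⟩ := eventually_atTop.1 (hε.eventually_lt_const (show 0 < δ / 5 by positivity))
  refine ⟨max N₁ N₂, fun i hi j hj ↦ ?_⟩
  have hij := hN₁ i (le_of_max_le_left hi) j (le_of_max_le_left hj)
  have hεi := hN₂ i (le_of_max_le_right hi)
  have hεj := hN₂ j (le_of_max_le_right hj)
  have hfi := hf i t q
  have hfj := hf j q t
  rw [dist_comm q t] at hfj
  linarith [dist_triangle4 (f i t) (f i q) (f j q) (f j t)]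

theorem exists_subseq_tendsto_lipschitzWith_one [TopologicalSpace.SeparableSpace T] [ProperSpace Y]
    (hε : Tendsto ε atTop (𝓝 0)) (hf : ∀ n s t, dist (f n s) (f n t) ≤ dist s t + ε n)
    {a : T} {y : Y} (ha : ∀ n, f n a = y) :
    ∃ (φ : ℕ → ℕ) (l : T → Y), StrictMono φ ∧ LipschitzWith 1 l ∧
      ∀ t, Tendsto (fun n ↦ f (φ n) t) atTop (𝓝 (l t)) := by
  obtain ⟨D, hDcount, hDdense⟩ := TopologicalSpace.exists_countable_dense T
  have := hDcount.to_subtype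
  obtain ⟨M, hM⟩ := hε.bddAbove_range
  have hcompact : IsCompact (univ.pi fun q : D ↦ closedBall y (dist q.1 a + M)) :=
    isCompact_univ_pi fun q ↦ isCompact_closedBall _ _
  obtain ⟨F, -, φ, hφ, hF⟩ := hcompact.tendsto_subseq (x := fun n (q : D) ↦ f n q) fun n q _ ↦ by
    rw [mem_closedBall, ← ha n]
    linarith [hf n q a, hM (mem_range_self n)]
  have hεφ : Tendsto (ε ∘ φ) atTop (𝓝 0) := hε.comp hφ.tendsto_atTop
  have hcauchy (t : T) : CauchySeq fun n ↦ f (φ n) t :=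
    cauchySeq_of_dense_of_dist_le_dist_add hDdense hεφ (fun n ↦ hf (φ n))
      (fun q hq ↦ (tendsto_pi_nhds.1 hF ⟨q, hq⟩).cauchySeq) t
  choose l hl using fun t ↦ cauchySeq_tendsto_of_complete (hcauchy t)
  exact ⟨φ, l, hφ, lipschitzWith_one_of_tendsto_of_dist_le_dist_add hεφ (fun n ↦ hf (φ n)) hl, hl⟩

end CoarseArzelaAscoli

section Fatou

theorem lowerSemicontinuousAt_le_liminf_min {Y : Type*} [TopologicalSpace Y] {G : Y → ℝ≥0∞} {y : Y}
    (hG : LowerSemicontinuousAt G y) {w : ℕ → Y} (hw : Tendsto w atTop (𝓝 y)) {N : ℕ → ℝ≥0∞}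
    (hN : Tendsto N atTop (𝓝 ∞)) : G y ≤ liminf (fun n ↦ min (G (w n)) (N n)) atTop := by
  refine le_of_forall_lt_imp_le_of_dense fun b hb ↦ le_liminf_of_le (by isBoundedDefault) ?_
  filter_upwards [hw.eventually (hG b hb), hN.eventually_const_lt hb.lt_top] with n hGn hNn
  exact le_min hGn.le hNn.le

variable {G : X → ℝ≥0∞} {S : ℕ → ℝ} {s : ℝ} {f : ℕ → ℝ → X} {l : ℝ → X} {N : ℕ → ℝ≥0∞}

theorem lintegral_Ico_le_liminf (hG : LowerSemicontinuous G) (hf : ∀ n, Measurable (f n))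
    (hS : Tendsto S atTop (𝓝 s)) (hl : ∀ t, Tendsto (f · t) atTop (𝓝 (l t)))
    (hN : Tendsto N atTop (𝓝 ∞)) :
    ∫⁻ t in Ico 0 s, G (l t) ≤
      liminf (fun n ↦ ∫⁻ t in Ico 0 (S n), min (G (f n t)) (N n)) atTop := by
  simp only [← lintegral_indicator measurableSet_Ico]
  refine le_trans (lintegral_mono fun t ↦ indicator_apply_le' (fun ht ↦ ?_) fun _ ↦ zero_le)
    (lintegral_liminf_le fun n ↦
      ((hG.measurable.comp (hf n)).min measurable_const).indicator measurableSet_Ico)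
  refine (lowerSemicontinuousAt_le_liminf_min (hG (l t)) (hl t) hN).trans_eq (liminf_congr ?_)
  filter_upwards [hS.eventually_const_lt ht.2] with n hn
  have htn : t ∈ Ico 0 (S n) := ⟨ht.1, hn⟩
  simp [htn]

end Fatou

theorem exists_curve_of_isCoarsePath [ProperSpace X] {G : X → ℝ≥0∞} (hG : LowerSemicontinuous G)
    {ε S : ℕ → ℝ} {x y : X} {f : ℕ → ℝ → X} {N : ℕ → ℝ≥0∞} {c : ℝ≥0∞} {R : ℝ}
    (hf : ∀ n, IsCoarsePath (ε n) x y (S n) (f n)) (hε : Tendsto ε atTop (𝓝 0))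
    (hS : ∀ n, S n ≤ R) (hN : Tendsto N atTop (𝓝 ∞))
    (hcost : ∀ n, ∫⁻ t in Ico 0 (S n), min (G (f n t)) (N n) ≤ c) :
    ∃ γ : Curve X, γ.toFun 0 = x ∧ γ.toFun γ.len = y ∧ γ.integral G ≤ c := by
  obtain ⟨s, hs, ψ, hψ, hSψ⟩ := isCompact_Icc.tendsto_subseq fun n ↦ ⟨(hf n).nonneg, hS n⟩
  obtain ⟨φ, l, hφ, hlip, hl⟩ := exists_subseq_tendsto_lipschitzWith_one
    (hε.comp hψ.tendsto_atTop) (fun n ↦ (hf (ψ n)).dist_le) fun n ↦ (hf (ψ n)).eq_left 0 le_rfl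
  have hψφ : Tendsto (ψ ∘ φ) atTop atTop := (hψ.comp hφ).tendsto_atTop
  have hSlim : Tendsto (fun n ↦ S (ψ (φ n))) atTop (𝓝 s) := hSψ.comp hφ.tendsto_atTop
  refine ⟨⟨s, hs.1, l, hlip.lipschitzOnWith⟩, ?_, ?_, ?_⟩
  · refine tendsto_nhds_unique (hl 0) (tendsto_const_nhds.congr fun n ↦ ?_)
    exact ((hf (ψ (φ n))).eq_left 0 le_rfl).symm
  · refine tendsto_nhds_unique (hl s) (tendsto_iff_dist_tendsto_zero.2 ?_)
    have hbound : Tendsto (fun n ↦ dist s (S (ψ (φ n))) + ε (ψ (φ n))) atTop (𝓝 0) := by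
      simpa using (tendsto_const_nhds (x := s).dist hSlim).add (hε.comp hψφ)
    refine squeeze_zero (fun _ ↦ dist_nonneg) (fun n ↦ ?_) hbound
    simpa [(hf (ψ (φ n))).eq_right _ le_rfl] using (hf (ψ (φ n))).dist_le s (S (ψ (φ n)))
  · calc ∫⁻ t in Icc 0 s, G (l t) = ∫⁻ t in Ico 0 s, G (l t) :=
          setLIntegral_congr Ico_ae_eq_Icc.symm
      _ ≤ liminf (fun n ↦ ∫⁻ t in Ico 0 (S (ψ (φ n))),
            min (G (f (ψ (φ n)) t)) (N (ψ (φ n)))) atTop :=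
          lintegral_Ico_le_liminf hG (fun n ↦ (hf _).measurable) hSlim hl (hN.comp hψφ)
      _ ≤ c := liminf_le_of_frequently_le' (.of_forall fun n ↦ hcost _)

/-! ### Measurability of functions with an integrable upper gradient -/

theorem IsUpperGradient.mono {Y : Type*} [MetricSpace Y] [MeasurableSpace Y] {u : Y → ℝ}
    {g G : Y → ℝ≥0∞} (hu : IsUpperGradient u g) (hG : Measurable G) (hgG : g ≤ G) :
    IsUpperGradient u G :=
  ⟨hG, fun γ ↦ (hu.2 γ).trans (lintegral_mono fun _ ↦ hgG _)⟩

section Measurability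

variable {μ : Measure X} {Cd CP lam : ℝ} {G : X → ℝ≥0∞} {x y : X} {m : ℝ≥0}

theorem Poincare.exists_isCoarsePath [ProperSpace X] (hP : Poincare μ CP lam) (hD : Doubling μ Cd)
    (hG : Measurable G) (hx : maximalFunction μ G x ≤ m) (hy : maximalFunction μ G y ≤ m)
    {c : ℝ≥0} (hc : maximalLipschitzConst Cd CP * m * nndist x y < c) {ε : ℝ} (hε : 0 < ε)
    (N : ℝ≥0) :
    ∃ S f, IsCoarsePath ε x y S f ∧ ∫⁻ t in Ico 0 S, min (G (f t)) N ≤ c := by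
  have htrunc : (fun w ↦ min (G w) N) ≤ G := fun w ↦ min_le_left _ _
  have hdist : coarseDist (fun w ↦ min (G w) N) ε x y < c :=
    (hP.coarseDist_le hD (hG.min measurable_const) (fun w ↦ min_le_right _ _) hε
      ((maximalFunction_mono μ htrunc x).trans hx)
      ((maximalFunction_mono μ htrunc y).trans hy)).trans_lt (by exact_mod_cast hc)
  simp only [coarseDist, iInf_lt_iff] at hdist
  obtain ⟨S, f, hf, hcost⟩ := hdist
  exact ⟨S, f, hf, hcost.le⟩

theorem Poincare.exists_curve_integral_le [ProperSpace X] (hP : Poincare μ CP lam)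
    (hD : Doubling μ Cd) (hG : LowerSemicontinuous G) (hG₁ : ∀ w, 1 ≤ G w)
    (hx : maximalFunction μ G x ≤ m) (hy : maximalFunction μ G y ≤ m)
    {c : ℝ≥0} (hc : maximalLipschitzConst Cd CP * m * nndist x y < c) :
    ∃ γ : Curve X, γ.toFun 0 = x ∧ γ.toFun γ.len = y ∧ γ.integral G ≤ c := by
  have hpath (n : ℕ) : ∃ S f, IsCoarsePath (1 / ((n : ℝ) + 1)) x y S f ∧
      ∫⁻ t in Ico 0 S, min (G (f t)) ↑(n + 1 : ℝ≥0) ≤ c :=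
    hP.exists_isCoarsePath hD hG.measurable hx hy hc (by positivity) (n + 1)
  choose S f hf hcost using hpath
  have hS (n : ℕ) : S n ≤ c := by
    rw [← ENNReal.ofReal_le_ofReal_iff c.coe_nonneg, ENNReal.ofReal_coe_nnreal]
    calc ENNReal.ofReal (S n) = ∫⁻ _ in Ico 0 (S n), 1 := by simp
      _ ≤ ∫⁻ t in Ico 0 (S n), min (G (f n t)) ↑(n + 1 : ℝ≥0) :=
          lintegral_mono fun t ↦ le_min (hG₁ _) (by simp)
      _ ≤ c := hcost n
  have hN : Tendsto (fun n : ℕ ↦ ((n + 1 : ℝ≥0) : ℝ≥0∞)) atTop (𝓝 ∞) := by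
    simpa [Function.comp_def] using ENNReal.tendsto_nat_nhds_top.comp (tendsto_add_atTop_nat 1)
  exact exists_curve_of_isCoarsePath hG hf tendsto_one_div_add_atTop_nhds_zero_nat hS hN hcost

theorem IsUpperGradient.lipschitzOnWith [ProperSpace X] {u : X → ℝ} (hu : IsUpperGradient u G)
    (hP : Poincare μ CP lam) (hD : Doubling μ Cd) (hG : LowerSemicontinuous G)
    (hG₁ : ∀ w, 1 ≤ G w) (m : ℝ≥0) :
    LipschitzOnWith (maximalLipschitzConst Cd CP * m) u {x | maximalFunction μ G x ≤ m} := by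
  intro x hx y hy
  rw [edist_nndist x, ← ENNReal.coe_mul, edist_nndist, ENNReal.coe_le_coe]
  refine le_of_forall_gt_imp_ge_of_dense fun c hc ↦ ?_
  obtain ⟨γ, hγx, hγy, hγ⟩ := hP.exists_curve_integral_le hD hG hG₁ hx hy hc
  rw [← ENNReal.coe_le_coe, ← edist_nndist, edist_dist, Real.dist_eq, ← hγx, ← hγy]
  exact (hu.2 γ).trans hγ

theorem IsUpperGradient.aemeasurable [CompleteSpace X] {u : X → ℝ} {g : X → ℝ≥0∞}
    (hu : IsUpperGradient u g) (hP : Poincare μ CP lam) (hD : Doubling μ Cd)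
    (hfin : ∫⁻ x, g x ∂μ ≠ ∞) : AEMeasurable u μ := by
  have := hD.properSpace
  have := hD.isLocallyFiniteMeasure
  obtain ⟨G, hgG, hG, hGint⟩ := exists_le_lowerSemicontinuous_lintegral_ge μ g hu.1 one_ne_zero
  have hG₁ : LowerSemicontinuous (G + 1) := hG.add lowerSemicontinuous_const
  have hmax : ∀ᵐ x ∂μ, maximalFunction μ G x < ∞ :=
    hD.ae_maximalFunction_lt_top hG.measurable.aemeasurable
      (ne_top_of_le_ne_top (by finiteness) hGint)
  have hlip (n : ℕ) : LipschitzOnWith (maximalLipschitzConst Cd CP * n) u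
      {x | maximalFunction μ (G + 1) x ≤ (n : ℝ≥0)} :=
    (hu.mono hG₁.measurable fun x ↦ (hgG x).trans le_self_add).lipschitzOnWith hP hD hG₁
      (fun _ ↦ le_add_self) n
  choose v hv hvu using fun n ↦ (hlip n).extend_real
  refine aemeasurable_of_tendsto_metrizable_ae atTop
    (fun n ↦ (hv n).continuous.measurable.aemeasurable) ?_
  filter_upwards [hmax] with x hx
  obtain ⟨N, hN⟩ := ENNReal.exists_nat_gt
    ((maximalFunction_add_one_le μ G x).trans_lt (by finiteness)).ne
  refine tendsto_const_nhds.congr' ?_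
  filter_upwards [eventually_ge_atTop N] with n hn
  exact hvu n (hN.le.trans (by exact_mod_cast hn))

end Measurability

/-! ### Operations on upper gradients -/

section Operations

variable {Y : Type*} [MetricSpace Y] [MeasurableSpace Y]

theorem IsUpperGradient.comp_lipschitzWith {u : Y → ℝ} {g : Y → ℝ≥0∞} (hu : IsUpperGradient u g)
    {φ : ℝ → ℝ} (hφ : LipschitzWith 1 φ) : IsUpperGradient (φ ∘ u) g := by
  refine ⟨hu.1, fun γ ↦ le_trans (ENNReal.ofReal_le_ofReal ?_) (hu.2 γ)⟩
  simpa [Real.dist_eq] using hφ.dist_le_mul (u (γ.toFun 0)) (u (γ.toFun γ.len))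

theorem abs_ciSup_sub_ciSup_le {ι : Type*} [Nonempty ι] {f h : ι → ℝ} (hf : BddAbove (range f))
    (hh : BddAbove (range h)) {c : ℝ} (hc : ∀ i, |f i - h i| ≤ c) :
    |(⨆ i, f i) - ⨆ i, h i| ≤ c := by
  have hle {a b : ι → ℝ} (hb : BddAbove (range b)) (hab : ∀ i, a i - b i ≤ c) :
      (⨆ i, a i) - ⨆ i, b i ≤ c :=
    sub_le_iff_le_add.2 <| ciSup_le fun i ↦
      (sub_le_iff_le_add.1 (hab i)).trans (by gcongr; exact le_ciSup hb i)
  exact abs_sub_le_iff.2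
    ⟨hle hh fun i ↦ (abs_sub_le_iff.1 (hc i)).1, hle hf fun i ↦ (abs_sub_le_iff.1 (hc i)).2⟩

theorem IsUpperGradient.iSup {ι : Type*} [Nonempty ι] {v : ι → Y → ℝ} {g : Y → ℝ≥0∞}
    (hv : ∀ i, IsUpperGradient (v i) g) (hbdd : ∀ x, BddAbove (range fun i ↦ v i x)) :
    IsUpperGradient (fun x ↦ ⨆ i, v i x) g := by
  refine ⟨(hv (Classical.arbitrary ι)).1, fun γ ↦ ?_⟩
  obtain hγ | hγ := eq_or_ne (γ.integral g) ∞
  · rw [UGIneq, hγ]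
    exact le_top
  · exact (ENNReal.ofReal_le_iff_le_toReal hγ).2 <| abs_ciSup_sub_ciSup_le (hbdd _) (hbdd _)
      fun i ↦ (ENNReal.ofReal_le_iff_le_toReal hγ).1 ((hv i).2 γ)

theorem IsUpperGradient.isWeakUpperGradientOn {μ : Measure Y} {u : Y → ℝ} {g : Y → ℝ≥0∞}
    (hu : IsUpperGradient u g) (A : Set Y) : IsWeakUpperGradientOn μ u g A :=
  ⟨hu.1.aemeasurable, 0, measurable_zero, by simp, fun γ hγ ↦ absurd (hu.2 γ) hγ.2⟩

theorem exists_measurable_ge_ae_eq {α : Type*} [MeasurableSpace α] {μ : Measure α}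
    {g : α → ℝ≥0∞} (hg : AEMeasurable g μ) : ∃ g', Measurable g' ∧ g ≤ g' ∧ g' =ᵐ[μ] g := by
  classical
  set N := toMeasurable μ {x | g x ≠ hg.mk g x}
  have hN : ∀ᵐ x ∂μ, x ∉ N :=
    measure_eq_zero_iff_ae_notMem.1 ((measure_toMeasurable _).trans hg.ae_eq_mk)
  refine ⟨N.piecewise ⊤ (hg.mk g),
    measurable_const.piecewise (measurableSet_toMeasurable _ _) hg.measurable_mk, fun x ↦ ?_, ?_⟩
  · by_cases hx : x ∈ N
    · simp [hx]
    · have hgx : g x = hg.mk g x := by_contra fun h ↦ hx (subset_toMeasurable _ _ h)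
      simp [hx, hgx]
  · filter_upwards [hg.ae_eq_mk, hN] with x hgx hx
    simp [hx, hgx]

theorem IsWeakUpperGradientOn.exists_isUpperGradient {μ : Measure Y} {u : Y → ℝ} {g : Y → ℝ≥0∞}
    (hg : IsWeakUpperGradientOn μ u g univ) {η : ℝ≥0∞} (hη : η ≠ 0) :
    ∃ g', IsUpperGradient u g' ∧ ∫⁻ x, g' x ∂μ ≤ ∫⁻ x, g x ∂μ + η := by
  obtain ⟨hgm, ρ, hρ, hρint, hρtop⟩ := hg
  obtain ⟨a, ha, haη⟩ := ENNReal.exists_nnreal_pos_mul_lt hρint.ne hη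
  obtain ⟨g₁, hg₁, hgg₁, hae⟩ := exists_measurable_ge_ae_eq hgm
  refine ⟨fun x ↦ g₁ x + a * ρ x, ⟨hg₁.add (hρ.const_mul _), fun γ ↦ ?_⟩, ?_⟩
  · by_cases hγ : UGIneq u g γ
    · exact hγ.trans (lintegral_mono fun t ↦ (hgg₁ _).trans le_self_add)
    · have haρ : a * γ.integral ρ = ∞ := by
        rw [hρtop γ ⟨fun _ _ ↦ mem_univ _, hγ⟩, ENNReal.mul_top (by exact_mod_cast ha.ne')]
      calc _ ≤ a * γ.integral ρ := haρ ▸ le_top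
        _ ≤ ∫⁻ t in Icc 0 γ.len, a * ρ (γ.toFun t) := lintegral_const_mul_le _ _
        _ ≤ _ := lintegral_mono fun t ↦ le_add_self
  · rw [lintegral_add_left hg₁, lintegral_const_mul _ hρ, lintegral_congr_ae hae]
    gcongr

end Operations

/-! ### The capacity as an outer measure -/

section Capacity

variable {Y : Type*} [MetricSpace Y] [MeasurableSpace Y] {μ : Measure Y} {A B : Set Y}

theorem IsUpperGradient.nNorm_le {u : Y → ℝ} {g : Y → ℝ≥0∞} (hu : IsUpperGradient u g) :
    NNorm μ univ u ≤ ∫⁻ x, ENNReal.ofReal |u x| ∂μ + ∫⁻ x, g x ∂μ := by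
  rw [NNorm, Measure.restrict_univ]
  gcongr
  exact iInf₂_le g (hu.isWeakUpperGradientOn univ)

theorem IsUpperGradient.capa1_le {u : Y → ℝ} {g : Y → ℝ≥0∞} (hu : IsUpperGradient u g)
    (hA : ∀ x ∈ A, 1 ≤ u x) :
    capa1 μ A ≤ ∫⁻ x, ENNReal.ofReal |u x| ∂μ + ∫⁻ x, g x ∂μ := by
  obtain htop | hfin := eq_or_ne (∫⁻ x, ENNReal.ofReal |u x| ∂μ + ∫⁻ x, g x ∂μ) ∞
  · exact htop ▸ le_top
  · have hmem : MemN11 μ univ u := hu.nNorm_le.trans_lt hfin.lt_top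
    exact (iInf₂_le_of_le u hmem (iInf_le _ hA)).trans hu.nNorm_le

theorem exists_isUpperGradient_of_capa1_lt {c : ℝ≥0∞} (hc : capa1 μ A < c) :
    ∃ (v : Y → ℝ) (g : Y → ℝ≥0∞), IsUpperGradient v g ∧ (∀ x, v x ∈ Icc 0 1) ∧
      (∀ x ∈ A, v x = 1) ∧ ∫⁻ x, ENNReal.ofReal (v x) ∂μ + ∫⁻ x, g x ∂μ ≤ c := by
  simp only [capa1, NNorm, Measure.restrict_univ, ENNReal.add_iInf, iInf_lt_iff] at hc
  obtain ⟨u, -, hA, g, hg, hlt⟩ := hc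
  obtain ⟨g', hg', hle⟩ := hg.exists_isUpperGradient (tsub_pos_of_lt hlt).ne'
  have hclamp : LipschitzWith 1 fun t : ℝ ↦ max 0 (min t 1) :=
    (LipschitzWith.id.min_const 1).const_max 0
  refine ⟨_, g', hg'.comp_lipschitzWith hclamp,
    fun x ↦ ⟨le_max_left _ _, max_le zero_le_one (min_le_right _ _)⟩,
    fun x hx ↦ by simp [hA x hx], ?_⟩
  calc _ ≤ ∫⁻ x, ENNReal.ofReal |u x| ∂μ + (∫⁻ x, g x ∂μ +
          (c - (∫⁻ x, ENNReal.ofReal |u x| ∂μ + ∫⁻ x, g x ∂μ))) := by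
        refine add_le_add (lintegral_mono fun x ↦ ENNReal.ofReal_le_ofReal ?_) hle
        exact max_le (abs_nonneg _) ((min_le_left _ _).trans (le_abs_self _))
    _ = c := by rw [← add_assoc, add_tsub_cancel_of_le hlt.le]

theorem capa1_mono (hAB : A ⊆ B) : capa1 μ A ≤ capa1 μ B :=
  iInf₂_mono fun _ _ ↦ le_iInf fun hB ↦ iInf_le _ fun x hx ↦ hB x (hAB hx)

theorem capa1_empty : capa1 μ ∅ = 0 := by
  have hzero : IsUpperGradient (fun _ : Y ↦ (0 : ℝ)) 0 :=
    ⟨measurable_zero, fun γ ↦ by simp [UGIneq]⟩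
  simpa using hzero.capa1_le (μ := μ) (A := ∅) (by simp)

theorem ofReal_iSup_le_tsum {ι : Type*} (a : ι → ℝ) :
    ENNReal.ofReal (⨆ i, a i) ≤ ∑' i, ENNReal.ofReal (a i) := by
  obtain htop | hfin := eq_or_ne (∑' i, ENNReal.ofReal (a i)) ∞
  · exact htop ▸ le_top
  · refine ENNReal.ofReal_le_of_le_toReal (Real.iSup_le (fun i ↦ ?_) ENNReal.toReal_nonneg)
    exact (ENNReal.ofReal_le_iff_le_toReal hfin).1 (ENNReal.le_tsum i)

theorem capa1_iUnion_le_tsum_lintegral {ι : Type*} [Countable ι] [Nonempty ι] {A : ι → Set Y}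
    {v : ι → Y → ℝ} {g : ι → Y → ℝ≥0∞} (hv : ∀ i, IsUpperGradient (v i) (g i))
    (hvm : ∀ i, AEMeasurable (v i) μ) (hv01 : ∀ i x, v i x ∈ Icc 0 1)
    (hvA : ∀ i, ∀ x ∈ A i, v i x = 1) :
    capa1 μ (⋃ i, A i) ≤ ∑' i, (∫⁻ x, ENNReal.ofReal (v i x) ∂μ + ∫⁻ x, g i x ∂μ) := by
  have hbdd (x : Y) : BddAbove (range fun i ↦ v i x) :=
    ⟨1, forall_mem_range.2 fun i ↦ (hv01 i x).2⟩
  have hgrad : IsUpperGradient (fun x ↦ ⨆ i, v i x) (fun x ↦ ∑' i, g i x) :=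
    .iSup (fun i ↦ (hv i).mono (.tsum fun j ↦ (hv j).1) fun _ ↦ ENNReal.le_tsum i) hbdd
  have hone : ∀ x ∈ ⋃ i, A i, 1 ≤ ⨆ i, v i x := fun x hx ↦ by
    obtain ⟨i, hi⟩ := mem_iUnion.1 hx
    exact (hvA i x hi).ge.trans (le_ciSup (hbdd x) i)
  calc capa1 μ (⋃ i, A i)
    _ ≤ ∫⁻ x, ENNReal.ofReal |⨆ i, v i x| ∂μ + ∫⁻ x, ∑' i, g i x ∂μ := hgrad.capa1_le hone
    _ ≤ ∫⁻ x, ∑' i, ENNReal.ofReal (v i x) ∂μ + ∫⁻ x, ∑' i, g i x ∂μ := by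
        gcongr with x
        rw [abs_of_nonneg (Real.iSup_nonneg fun i ↦ (hv01 i x).1)]
        exact ofReal_iSup_le_tsum _
    _ = ∑' i, (∫⁻ x, ENNReal.ofReal (v i x) ∂μ + ∫⁻ x, g i x ∂μ) := by
        rw [lintegral_tsum fun i ↦ (hvm i).ennreal_ofReal,
          lintegral_tsum fun i ↦ (hv i).1.aemeasurable, ENNReal.tsum_add]

end Capacity

section CapacityOuterMeasure

variable [CompleteSpace X] {μ : Measure X} {Cd CP lam : ℝ}

theorem Poincare.capa1_iUnion_le (hP : Poincare μ CP lam) (hD : Doubling μ Cd) {ι : Type*}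
    [Countable ι] (A : ι → Set X) : capa1 μ (⋃ i, A i) ≤ ∑' i, capa1 μ (A i) := by
  obtain _ | _ := isEmpty_or_nonempty ι
  · simp [capa1_empty]
  obtain htop | hfin := eq_or_ne (∑' i, capa1 μ (A i)) ∞
  · exact htop ▸ le_top
  refine ENNReal.le_of_forall_pos_le_add fun δ hδ _ ↦ ?_
  obtain ⟨η, hη, hηδ⟩ := ENNReal.exists_pos_sum_of_countable' (ENNReal.coe_pos.2 hδ).ne' ι
  have hsum : ∑' i, (capa1 μ (A i) + η i) ≤ ∑' i, capa1 μ (A i) + δ := by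
    rw [ENNReal.tsum_add]
    gcongr
  have hsum_fin : ∑' i, (capa1 μ (A i) + η i) ≠ ∞ := ne_top_of_le_ne_top (by finiteness) hsum
  choose v g hv hv01 hvA hle using fun i ↦ exists_isUpperGradient_of_capa1_lt
    (ENNReal.lt_add_right (ENNReal.ne_top_of_tsum_ne_top hfin i) (hη i).ne')
  have hvm (i : ι) : AEMeasurable (v i) μ := (hv i).aemeasurable hP hD <|
    ne_top_of_le_ne_top (ENNReal.ne_top_of_tsum_ne_top hsum_fin i) (le_add_self.trans (hle i))
  exact (capa1_iUnion_le_tsum_lintegral hv hvm hv01 hvA).trans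
    ((ENNReal.tsum_le_tsum hle).trans hsum)

/-- The `1`-capacity bundled as an outer measure, which gives access to the
symmetric-difference pseudometric of an outer measure. -/
def capacityOuterMeasure (hP : Poincare μ CP lam) (hD : Doubling μ Cd) : OuterMeasure X where
  measureOf := capa1 μ
  empty := capa1_empty
  mono := capa1_mono
  iUnion_nat A _ := hP.capa1_iUnion_le hD A

end CapacityOuterMeasure

/-- For an arbitrary `Ω ⊆ X`, the collection of sets `A ⊆ Ω` with
`capa₁(A) < ∞`, with distance `d(A₁,A₂) = capa₁(A₁ Δ A₂)`, is a complete metric space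
once sets at distance zero are identified: the distance is finite, vanishes on the
diagonal, is symmetric, satisfies the triangle inequality, and every Cauchy sequence
converges. -/
theorem capa_symmDiff_complete_metric
    (μ : Measure X) (hcomp : CompleteSpace X)
    (hdoub : ∃ Cd : ℝ, Doubling μ Cd) (hpoin : ∃ CP lam : ℝ, Poincare μ CP lam)
    (Ω : Set X) :
    (∀ A : Set X, A ⊆ Ω → capa1 μ (symmDiff A A) = 0) ∧
    (∀ A B : Set X, A ⊆ Ω → B ⊆ Ω → capa1 μ (symmDiff A B) = capa1 μ (symmDiff B A)) ∧
    (∀ A B C : Set X, A ⊆ Ω → B ⊆ Ω → C ⊆ Ω →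
      capa1 μ (symmDiff A C) ≤ capa1 μ (symmDiff A B) + capa1 μ (symmDiff B C)) ∧
    (∀ A B : Set X, A ⊆ Ω → B ⊆ Ω → capa1 μ A < ∞ → capa1 μ B < ∞ →
      capa1 μ (symmDiff A B) < ∞) ∧
    (∀ A : ℕ → Set X, (∀ i, A i ⊆ Ω) → (∀ i, capa1 μ (A i) < ∞) →
      (∀ ε : ℝ, 0 < ε → ∃ N : ℕ, ∀ m ≥ N, ∀ n ≥ N,
        capa1 μ (symmDiff (A m) (A n)) < ENNReal.ofReal ε) →
      ∃ B : Set X, B ⊆ Ω ∧ capa1 μ B < ∞ ∧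
        Filter.Tendsto (fun i => capa1 μ (symmDiff (A i) B)) Filter.atTop (𝓝 0)) := by
  obtain ⟨Cd, hD⟩ := hdoub
  obtain ⟨CP, lam, hP⟩ := hpoin
  let m := capacityOuterMeasure hP hD
  refine ⟨fun A _ ↦ ?_, fun A B _ _ ↦ ?_, fun A B C _ _ _ ↦ ?_, fun A B _ _ hA hB ↦ ?_,
    fun A hAΩ hfin hcauchy ↦ ?_⟩
  · rw [symmDiff_self]
    exact measure_empty (μ := m)
  · rw [symmDiff_comm]
  · exact outerMeasure_symmDiff_triangle m A B C
  · exact outerMeasure_symmDiff_lt_top m hA hB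
  · exact exists_subset_outerMeasure_symmDiff_tendsto_zero m hAΩ hfin hcauchy

end PaperBV
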